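/- Let n ≥ 1 and N ≥ 1 with N and n+1 coprime. For every v : ZMod N → (Fin n → ℝ) there exists a unique M : ZMod N → Matrix (Fin (n+1)) (Fin (n+1)) ℝ such that for every s ∈ ZMod N: (i) trace(M_s) = 0; (ii) (M_s)_{i,n+1} = v^i_s for i = 1,…,n; and (iii) every entry of M_{s+1}·K_s − K_s·M_s in rows 1,…,n vanishes, and its (n+1, n) entry vanishes. -/

import Mathlib

/-- The matrix `K_s` (rows and columns `1,…,n+1` of the paper correspond to the
Lean indices `0,…,n`): `(K_s)_{1,n+1} = (−1)^n`, `(K_s)_{i,i−1} = 1` for `i = 2,…,n`,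
`(K_s)_{n+1,j} = k^{j+1}_s` for `j = 1,…,n−1`, `(K_s)_{n+1,n} = 1`,
`(K_s)_{n+1,n+1} = k^1_s`, all other entries `0`. -/
noncomputable def Kmat {n N : ℕ} (k : ZMod N → Fin n → ℝ) (s : ZMod N) :
    Matrix (Fin (n + 1)) (Fin (n + 1)) ℝ :=
  Matrix.of fun i j =>
    (if (i : ℕ) = 0 ∧ (j : ℕ) = n then (-1 : ℝ) ^ n else 0)
    + (if 1 ≤ (i : ℕ) ∧ (i : ℕ) ≤ n - 1 ∧ (j : ℕ) + 1 = (i : ℕ) then 1 else 0)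
    + (if (i : ℕ) = n ∧ (j : ℕ) + 2 ≤ n then
        ∑ m : Fin n, (if (m : ℕ) = (j : ℕ) + 1 then k s m else 0) else 0)
    + (if (i : ℕ) = n ∧ (j : ℕ) + 1 = n then 1 else 0)
    + (if (i : ℕ) = n ∧ (j : ℕ) = n then
        ∑ m : Fin n, (if (m : ℕ) = 0 then k s m else 0) else 0)

/-- Weights of the cyclic shift in `Kmat`. -/
def wgt (n : ℕ) (i : Fin (n + 1)) : ℝ := if (i : ℕ) = 0 then (-1 : ℝ) ^ n else 1

lemma wgt_ne (n : ℕ) (i : Fin (n + 1)) : wgt n i ≠ 0 := by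
  unfold wgt; split_ifs <;> simp

lemma Kmat_shape {n N : ℕ} (hn : 1 ≤ n) (k : ZMod N → Fin n → ℝ) (s : ZMod N) :
    ∃ κ : Fin (n + 1) → ℝ, κ ⟨n - 1, by omega⟩ = 0 ∧
      ∀ i j, Kmat k s i j = (if i = j + 1 then wgt n i else 0)
        + (if i = Fin.last n then κ j else 0) := by
  refine ⟨fun j => (if (j : ℕ) + 2 ≤ n then
        ∑ m : Fin n, (if (m : ℕ) = (j : ℕ) + 1 then k s m else 0) else 0)
      + (if (j : ℕ) = n then ∑ m : Fin n, (if (m : ℕ) = 0 then k s m else 0) else 0), ?_, ?_⟩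
  · have h1 : ¬ (n - 1 + 2 ≤ n) := by omega
    have h2 : ¬ (n - 1 = n) := by omega
    simp [h1, h2]
  · intro i j
    have hij : i = j + 1 ↔ ((i : ℕ) = 0 ∧ (j : ℕ) = n) ∨ (j : ℕ) + 1 = (i : ℕ) := by
      rw [Fin.ext_iff, Fin.val_add_one]
      split_ifs with h
      · subst h
        simp only [Fin.val_last, and_true]
        omega
      · have : (j : ℕ) ≠ n := fun h' => h (Fin.ext h')
        omega
    have hL : i = Fin.last n ↔ (i : ℕ) = n := by rw [Fin.ext_iff]; simp
    have hi := i.2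
    have hj := j.2
    simp only [Kmat, Matrix.of_apply, wgt, hij, hL]
    generalize (∑ m : Fin n, (if (m : ℕ) = (j : ℕ) + 1 then k s m else 0)) = A
    generalize (∑ m : Fin n, (if (m : ℕ) = 0 then k s m else 0)) = B
    generalize (i : ℕ) = a at *
    generalize (j : ℕ) = b at *
    clear hij hL
    split_ifs <;> first | (exfalso; omega) | simp

lemma last_add_one (n : ℕ) : Fin.last n + 1 = 0 := by simp

section
variable {n N : ℕ} (k : ZMod N → Fin n → ℝ) (s : ZMod N)

lemma K_mul_row (A : Matrix (Fin (n + 1)) (Fin (n + 1)) ℝ) (hn : 1 ≤ n)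
    (i j : Fin (n + 1)) (hi : i + 1 ≠ Fin.last n) :
    (Kmat k s * A) (i + 1) j = wgt n (i + 1) * A i j := by
  obtain ⟨κ, -, h⟩ := Kmat_shape hn k s
  simp [Matrix.mul_apply, h, hi, ite_mul]

lemma mul_K_row (A : Matrix (Fin (n + 1)) (Fin (n + 1)) ℝ) (hn : 1 ≤ n)
    (i j : Fin (n + 1)) (hi : A i (Fin.last n) = 0) :
    (A * Kmat k s) i j = A i (j + 1) * wgt n (j + 1) := by
  obtain ⟨κ, -, h⟩ := Kmat_shape hn k s
  simp [Matrix.mul_apply, h, mul_add, Finset.sum_add_distrib, hi]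

lemma K_det (hn : 1 ≤ n) : IsUnit (Kmat k s).det := by
  rw [isUnit_iff_ne_zero]
  intro h0
  obtain ⟨x, hx, hK⟩ := Matrix.exists_mulVec_eq_zero_iff.mpr h0
  obtain ⟨κ, hκ, h⟩ := Kmat_shape hn k s
  have e : ∀ i, (Kmat k s).mulVec x i = 0 := fun i => by rw [hK]; rfl
  have h1 : ∀ i, i + 1 ≠ Fin.last n → x i = 0 := by
    intro i hi
    have := e (i + 1)
    simpa [Matrix.mulVec, dotProduct, h, hi, wgt_ne] using this
  apply hx
  funext i
  by_cases hi : i + 1 = Fin.last n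
  swap
  · exact h1 i hi
  have hiq : i = ⟨n - 1, by omega⟩ := by
    have : (⟨n - 1, by omega⟩ : Fin (n + 1)) + 1 = Fin.last n := by
      rw [Fin.ext_iff, Fin.val_add_one_of_lt]
      · simp; omega
      · rw [Fin.lt_def]; simp; omega
    exact add_right_cancel (hi.trans this.symm)
  have := e (Fin.last n)
  have hz : ∑ j, κ j * x j = 0 := by
    apply Finset.sum_eq_zero
    intro j _
    by_cases hj : j + 1 = Fin.last n
    · have : j = ⟨n - 1, by omega⟩ := (add_right_cancel (hj.trans hi.symm)).trans hiq
      rw [this, hκ, zero_mul]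
    · rw [h1 j hj, mul_zero]
  rw [← hi] at this
  simp only [Matrix.mulVec, dotProduct, h, hi, add_mul, Finset.sum_add_distrib] at this
  rw [← hi] at this
  simpa [wgt_ne, hz] using this

lemma K_col (hn : 1 ≤ n) (i : Fin (n + 1)) :
    Kmat k s i ⟨n - 1, by omega⟩ = if i = Fin.last n then 1 else 0 := by
  obtain ⟨κ, hκ, h⟩ := Kmat_shape hn k s
  have : (⟨n - 1, by omega⟩ : Fin (n + 1)) + 1 = Fin.last n := by
    rw [Fin.ext_iff, Fin.val_add_one_of_lt]
    · simp; omega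
    · rw [Fin.lt_def]; simp; omega
  rw [h, this, hκ]
  have hn' : n ≠ 0 := by omega
  by_cases hi : i = Fin.last n <;> simp [hi, wgt, hn']

lemma trace_rel (hn : 1 ≤ n) (A B : Matrix (Fin (n + 1)) (Fin (n + 1)) ℝ)
    (h : ∀ i j, i ≠ Fin.last n → (A * Kmat k s - Kmat k s * B) i j = 0) :
    (A * Kmat k s - Kmat k s * B) (Fin.last n) ⟨n - 1, by omega⟩ = A.trace - B.trace := by
  have hu := K_det k s hn
  set K := Kmat k s with hK
  set E := A * K - K * B with hE
  have h1 : (K⁻¹ * E).trace = A.trace - B.trace := by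
    rw [hE, Matrix.mul_sub, Matrix.trace_sub, ← Matrix.mul_assoc, ← Matrix.mul_assoc,
      Matrix.nonsing_inv_mul _ hu, Matrix.one_mul, Matrix.mul_assoc, Matrix.trace_mul_comm,
      Matrix.mul_assoc, Matrix.mul_nonsing_inv _ hu, Matrix.mul_one]
  have h2 : ∀ i, K⁻¹ i (Fin.last n) = if i = ⟨n - 1, by omega⟩ then 1 else 0 := by
    intro i
    have : (K⁻¹ * K) i ⟨n - 1, by omega⟩ = K⁻¹ i (Fin.last n) := by
      have hc : ∀ j, K j ⟨n - 1, by omega⟩ = if j = Fin.last n then 1 else 0 := K_col k s hn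
      simp only [Matrix.mul_apply, hc]
      simp
    rw [← this, Matrix.nonsing_inv_mul _ hu, Matrix.one_apply]
  rw [← h1]
  have h3 : ∀ i, (K⁻¹ * E) i i = K⁻¹ i (Fin.last n) * E (Fin.last n) i := by
    intro i
    rw [Matrix.mul_apply, Finset.sum_eq_single (Fin.last n)]
    · intro b _ hb
      rw [h b i hb, mul_zero]
    · simp
  simp [Matrix.trace, h3, h2]

end

open Fin.NatCast Fin.CommRing in
lemma key_inj {n N : ℕ} [NeZero N] (hn : 1 ≤ n) (hco : Nat.Coprime N (n + 1))
    (k : ZMod N → Fin n → ℝ) (M : ZMod N → Matrix (Fin (n + 1)) (Fin (n + 1)) ℝ)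
    (htr : ∀ s, (M s).trace = 0)
    (hcol : ∀ s i, i ≠ Fin.last n → M s i (Fin.last n) = 0)
    (hrow : ∀ s i j, i ≠ Fin.last n →
      (M (s + 1) * Kmat k s - Kmat k s * M s) i j = 0) : M = 0 := by
  have step : ∀ s i j, i + 1 ≠ Fin.last n →
      M (s + 1) (i + 1) (j + 1) * wgt n (j + 1) = wgt n (i + 1) * M s i j := by
    intro s i j hi
    have := hrow s (i + 1) j hi
    rw [Matrix.sub_apply, K_mul_row k s _ hn i j hi,
      mul_K_row k s _ hn (i + 1) j (hcol _ _ hi)] at this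
    linarith
  -- off-diagonal entries
  have stepz : ∀ i j, i + 1 ≠ Fin.last n →
      ((∀ s, M s (i + 1) (j + 1) = 0) ↔ ∀ s, M s i j = 0) := by
    intro i j hi
    constructor
    · intro h s
      have := step s i j hi
      rw [h, zero_mul] at this
      exact (mul_eq_zero.mp this.symm).resolve_left (wgt_ne _ _)
    · intro h s
      have := step (s - 1) i j hi
      rw [h, mul_zero, sub_add_cancel] at this
      exact (mul_eq_zero.mp this).resolve_right (wgt_ne _ _)
  have chain : ∀ d : Fin (n + 1), ∀ t : ℕ, t ≤ n →
      ((∀ s, M s (Fin.last n + (t : Fin (n + 1))) (Fin.last n + (t : Fin (n + 1)) + d) = 0) ↔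
        ∀ s, M s (Fin.last n) (Fin.last n + d) = 0) := by
    intro d t
    induction t with
    | zero => intro _; simp
    | succ t ih =>
      intro ht
      rw [← ih (by omega), ← stepz (Fin.last n + (t : Fin (n + 1))) (Fin.last n + (t : Fin (n + 1)) + d)]
      · have e1 : Fin.last n + ((t + 1 : ℕ) : Fin (n + 1))
            = Fin.last n + (t : Fin (n + 1)) + 1 := by push_cast; ring
        have e2 : Fin.last n + (t : Fin (n + 1)) + 1 + d
            = Fin.last n + (t : Fin (n + 1)) + d + 1 := by ring
        rw [e1, e2]
      · intro h
        have h' : ((t + 1 : ℕ) : Fin (n + 1)) = 0 := by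
          have : Fin.last n + ((t + 1 : ℕ) : Fin (n + 1)) = Fin.last n + 0 := by
            rw [add_zero]; push_cast; rw [← add_assoc]; exact h
          exact add_left_cancel this
        have := congrArg Fin.val h'
        rw [Fin.val_natCast, Nat.mod_eq_of_lt (by omega)] at this
        simp at this
  have chain' : ∀ d i : Fin (n + 1), (∀ s, M s i (i + d) = 0) ↔
        ∀ s, M s (Fin.last n) (Fin.last n + d) = 0 := by
    intro d i
    have := chain d (i - Fin.last n : Fin (n + 1)).val (by omega)
    rw [Fin.cast_val_eq_self] at this
    simpa using this
  have off : ∀ s i j, i ≠ j → M s i j = 0 := by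
    intro s i j hij
    have hd : j - i ≠ 0 := sub_ne_zero.mpr (Ne.symm hij)
    have h1 : ∀ s, M s (Fin.last n - (j - i)) (Fin.last n - (j - i) + (j - i)) = 0 := by
      intro s
      rw [sub_add_cancel]
      apply hcol
      intro h
      exact hd (by simpa using h)
    have h2 := (chain' (j - i) i).mpr ((chain' (j - i) _).mp h1) s
    simpa using h2
  -- diagonal entries
  have dg : ∀ s i, i + 1 ≠ Fin.last n → M (s + 1) (i + 1) (i + 1) = M s i i := by
    intro s i hi
    have := step s i i hi
    rw [mul_comm] at this
    exact mul_left_cancel₀ (wgt_ne _ _) this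
  have dg' : ∀ s i, M (s + 1) (i + 1) (i + 1) = M s i i := by
    intro s i
    by_cases hi : i + 1 = Fin.last n
    swap
    · exact dg s i hi
    have e1 : ∑ j, M (s + 1) (j + 1) (j + 1) = 0 := by
      rw [← htr (s + 1)]
      exact Equiv.sum_comp (Equiv.addRight (1 : Fin (n + 1))) (fun j => M (s + 1) j j)
    have e2 : ∑ j, M s j j = 0 := htr s
    have e3 : ∑ j, (M (s + 1) (j + 1) (j + 1) - M s j j) = 0 := by
      rw [Finset.sum_sub_distrib, e1, e2, sub_zero]
    rw [Finset.sum_eq_single i] at e3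
    · linarith
    · intro b _ hb
      rw [dg s b, sub_self]
      intro h
      exact hb (add_right_cancel (h.trans hi.symm))
    · simp
  have iter : ∀ (m : ℕ) s i, M (s + m) (i + m) (i + m) = M s i i := by
    intro m
    induction m with
    | zero => simp
    | succ m ih =>
      intro s i
      rw [← ih s i, ← dg' (s + m) (i + m)]
      push_cast
      simp only [add_assoc]
  have const : ∀ s i j, M s j j = M s i i := by
    intro s i j
    obtain ⟨m, hm1, hm2⟩ := Nat.chineseRemainder hco 0 (j - i : Fin (n + 1)).val
    have h1 : (m : ZMod N) = 0 := by
      have := (ZMod.natCast_eq_natCast_iff m 0 N).mpr hm1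
      simpa using this
    have h2 : (m : Fin (n + 1)) = j - i := by
      apply Fin.ext
      rw [Fin.val_natCast]
      have : m % (n + 1) = (j - i : Fin (n + 1)).val % (n + 1) := hm2
      rw [this, Nat.mod_eq_of_lt (Fin.is_lt _)]
    have := iter m s i
    rw [h1, h2] at this
    simpa using this
  funext s
  ext i j
  by_cases hij : i = j
  · subst hij
    have := htr s
    simp only [Matrix.trace, Matrix.diag] at this
    rw [Finset.sum_congr rfl (fun j _ => const s i j)] at this
    simp at this
    rcases this with h | h
    · exfalso
      have : (0 : ℝ) ≤ n := Nat.cast_nonneg n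
      linarith
    · simpa using h
  · simpa using off s i j hij

/-- The square linear system, as an endomorphism. -/
noncomputable def sysT {n N : ℕ} (k : ZMod N → Fin n → ℝ) :
    (ZMod N → Matrix (Fin (n + 1)) (Fin (n + 1)) ℝ) →ₗ[ℝ]
      (ZMod N → Matrix (Fin (n + 1)) (Fin (n + 1)) ℝ) where
  toFun M := fun s => Matrix.of fun i j =>
    if i = Fin.last n then (if j = Fin.last n then (M s).trace else M s j (Fin.last n))
    else (M (s + 1) * Kmat k s - Kmat k s * M s) i j
  map_add' A B := by
    funext s
    ext i j
    simp only [Matrix.of_apply, Pi.add_apply, Matrix.add_apply, Matrix.trace_add,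
      Matrix.add_mul, Matrix.mul_add, Matrix.sub_apply]
    split_ifs <;> ring
  map_smul' c A := by
    funext s
    ext i j
    simp only [Matrix.of_apply, Pi.smul_apply, Matrix.smul_apply, Matrix.trace_smul,
      Matrix.smul_mul, Matrix.mul_smul, Matrix.sub_apply, RingHom.id_apply, smul_eq_mul]
    split_ifs <;> ring

lemma sysT_apply {n N : ℕ} (k : ZMod N → Fin n → ℝ)
    (M : ZMod N → Matrix (Fin (n + 1)) (Fin (n + 1)) ℝ) (s : ZMod N) (i j : Fin (n + 1)) :
    sysT k M s i j =
    if i = Fin.last n then (if j = Fin.last n then (M s).trace else M s j (Fin.last n))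
    else (M (s + 1) * Kmat k s - Kmat k s * M s) i j := rfl

lemma sysT_inj {n N : ℕ} [NeZero N] (hn : 1 ≤ n) (hco : Nat.Coprime N (n + 1))
    (k : ZMod N → Fin n → ℝ) : Function.Injective (sysT k) := by
  rw [injective_iff_map_eq_zero]
  intro M hM
  have h : ∀ s i j, sysT k M s i j = 0 := fun s i j => by rw [hM]; rfl
  apply key_inj hn hco k M
  · intro s
    simpa [sysT_apply] using h s (Fin.last n) (Fin.last n)
  · intro s i hi
    simpa [sysT_apply, hi] using h s (Fin.last n) i
  · intro s i j hi
    have := h s i j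
    rwa [sysT_apply, if_neg hi] at this

/-- given invariants `k` and an invariant vector `v`, there is a unique
sequence of trace-free matrices `M_s` whose last column (rows `1,…,n`) is `v_s` and
such that all entries in rows `1,…,n` of the structure expression
`M_{s+1}K_s − K_sM_s`, as well as its `(n+1,n)` entry, vanish. -/
theorem stmt_7 {n N : ℕ} [NeZero N] (hn : 1 ≤ n) (hco : Nat.Coprime N (n + 1))
    (k : ZMod N → Fin n → ℝ) (v : ZMod N → Fin n → ℝ) :
    ∃! M : ZMod N → Matrix (Fin (n + 1)) (Fin (n + 1)) ℝ,
      ∀ s : ZMod N,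
        (M s).trace = 0 ∧
        (∀ i : Fin n, M s i.castSucc (Fin.last n) = v s i) ∧
        (∀ i : Fin n, ∀ j : Fin (n + 1),
          (M (s + 1) * Kmat k s - Kmat k s * M s) i.castSucc j = 0) ∧
        (M (s + 1) * Kmat k s - Kmat k s * M s) (Fin.last n) ⟨n - 1, by omega⟩ = 0 := by
  have hinj := sysT_inj hn hco k
  have hsurj := LinearMap.injective_iff_surjective.mp hinj
  obtain ⟨M, hM⟩ := hsurj (fun s => Matrix.of fun i j =>
    if i = Fin.last n then (if h : (j : ℕ) < n then v s ⟨j, h⟩ else 0) else 0)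
  have hM' : ∀ s i j, sysT k M s i j =
      if i = Fin.last n then (if h : (j : ℕ) < n then v s ⟨j, h⟩ else 0) else 0 :=
    fun s i j => by rw [hM]; rfl
  have htr : ∀ s, (M s).trace = 0 := by
    intro s
    simpa [sysT_apply] using hM' s (Fin.last n) (Fin.last n)
  have hrow : ∀ s i j, i ≠ Fin.last n →
      (M (s + 1) * Kmat k s - Kmat k s * M s) i j = 0 := by
    intro s i j hi
    have := hM' s i j
    rwa [sysT_apply, if_neg hi, if_neg hi] at this
  refine ⟨M, fun s => ⟨htr s, ?_, ?_, ?_⟩, ?_⟩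
  · intro i
    simpa [sysT_apply, Fin.castSucc_ne_last] using hM' s (Fin.last n) i.castSucc
  · intro i j
    exact hrow s _ j (Fin.castSucc_ne_last i)
  · rw [trace_rel k s hn _ _ (hrow s), htr, htr, sub_zero]
  · intro M₂ h₂
    apply hinj
    funext s
    ext i j
    rw [hM', sysT_apply]
    obtain ⟨t2, c2, r2, -⟩ := h₂ s
    by_cases hi : i = Fin.last n
    · rw [if_pos hi, if_pos hi]
      rcases Fin.eq_castSucc_or_eq_last j with ⟨j, rfl⟩ | rfl
      · simp [c2, Fin.castSucc_ne_last]
      · simp [t2]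
    · rw [if_neg hi, if_neg hi]
      rcases Fin.eq_castSucc_or_eq_last i with ⟨i, rfl⟩ | rfl
      · exact r2 i j
      · exact absurd rfl hi
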